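/- Let (X, W) be a strong left Frobenius pair in A. Then ((W, X̂), (X, Ŵ)) is a Hovey twin cotorsion pair on Thick(X) = X̂; in particular, Ext^1(W, Y) = 0 for all W ∈ W, Y ∈ Ŵ, and Cone(Ŵ, W) = CoCone(Ŵ, W) = Ŵ, where these classes are computed inside X̂. -/

import Mathlib

/-!
The proof is Auslander–Buchweitz approximation theory, organised around the fact that the objects of
`W` are relatively projective in `X̂`: dimension shifting gives `Extⁱ(W, X̂) = 0` for `i ≥ 1`
(`ext_hat`), so morphisms from `W` lift along epimorphisms with kernel in `X̂` (`IsSES.exists_lift`).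

Since `W` generates `X`, the terms of an `X`-resolution other than the last can be taken in `W`
(`HatGen`, `hat_iff_hatGen`). A horseshoe argument makes `X̂ₙ` closed under extensions
(`hatGen_ext`). For a direct summand `A` of `M`, where `0 → K → W₀ → M → 0` is the first step of
such a resolution, the kernel of `W₀ → M → A` is a direct summand of `K ⊞ W₀`, and induction on the
length shows that `X̂` is closed under direct summands (`hatGen_summand`). The remaining parts of
two-out-of-three follow from pullbacks and the closure of `X` under kernels of epimorphisms, so `X̂`
is thick and equals `Thick(X)`.

The pair `(W, W)` is again a strong left Frobenius pair (`StrongLeftFrobenius.self`), so all of this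
applies to `Ŵ` as well. The cotorsion pair `(X, Ŵ)` comes from the usual approximation sequences,
built by pushouts (`approx`). Finally, a sequence `0 → M → V₀ → S₀ → 0` with `M ∈ X̂` and
`S₀ ∈ W` splits, which gives `CoCone(Ŵ, W) = Ŵ`.
-/

open CategoryTheory CategoryTheory.Limits CategoryTheory.Abelian ZeroObject

universe w v u

namespace FrobeniusPaper

variable {C : Type u} [Category.{v} C] [Abelian C]

/-- `f, g` form a short exact sequence `0 → A → B → D → 0` in the abelian category `C`. -/
def IsSES {A B D : C} (f : A ⟶ B) (g : B ⟶ D) : Prop :=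
  ∃ w : f ≫ g = 0, (ShortComplex.mk f g w).ShortExact

/-- A "subcategory" in the sense of the paper: a full additive subcategory, regarded as the
predicate of membership for its objects, closed under isomorphisms and direct summands. -/
structure IsSubcat (X : C → Prop) : Prop where
  zero : X 0
  iso_closed : ∀ {A B : C}, (A ≅ B) → X A → X B
  biprod_closed : ∀ {A B : C}, X A → X B → X (A ⊞ B)
  summand_closed : ∀ {A M : C} (i : A ⟶ M) (p : M ⟶ A), i ≫ p = 𝟙 A → X M → X A

/-- `Hat X n M` means `M ∈ X̂ₙ`, i.e. there is an exact sequence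
`0 → Xₙ → ⋯ → X₁ → X₀ → M → 0` with all `Xᵢ ∈ X`. -/
def Hat (X : C → Prop) : ℕ → C → Prop
  | 0, M => X M
  | (n + 1), M => ∃ (K E : C) (f : K ⟶ E) (g : E ⟶ M), IsSES f g ∧ X E ∧ Hat X n K

/-- `M ∈ X̂ = ⋃ₙ X̂ₙ`. -/
def HatAll (X : C → Prop) (M : C) : Prop := ∃ n, Hat X n M

/-- `W` is a cogenerator for `X`. -/
def IsCogenerator (W X : C → Prop) : Prop :=
  (∀ M, W M → X M) ∧
    ∀ M, X M → ∃ (W₀ X' : C) (f : M ⟶ W₀) (g : W₀ ⟶ X'), IsSES f g ∧ W W₀ ∧ X X'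

/-- `W` is a generator for `X`. -/
def IsGenerator (W X : C → Prop) : Prop :=
  (∀ M, W M → X M) ∧
    ∀ M, X M → ∃ (X' W₀ : C) (f : X' ⟶ W₀) (g : W₀ ⟶ M), IsSES f g ∧ W W₀ ∧ X X'

/-- `X` is closed under extensions. -/
def ExtClosed (X : C → Prop) : Prop :=
  ∀ ⦃A B D : C⦄ (f : A ⟶ B) (g : B ⟶ D), IsSES f g → X A → X D → X B

/-- `X` is closed under kernels of epimorphisms. -/
def KerEpiClosed (X : C → Prop) : Prop :=
  ∀ ⦃A B D : C⦄ (f : A ⟶ B) (g : B ⟶ D), IsSES f g → X B → X D → X A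

/-- A thick subcategory: closed under direct summands and two-out-of-three for
short exact sequences. -/
def IsThickSub (T : C → Prop) : Prop :=
  IsSubcat T ∧ ∀ ⦃A B D : C⦄ (f : A ⟶ B) (g : B ⟶ D), IsSES f g →
    (T A → T B → T D) ∧ (T A → T D → T B) ∧ (T B → T D → T A)

/-- Membership in `Thick(X)`, the smallest thick subcategory containing `X`. -/
def thickClosure (X : C → Prop) (M : C) : Prop :=
  ∀ T : C → Prop, IsThickSub T → (∀ N, X N → T N) → T M

variable [HasExt.{w} C]

/-- `Y ∈ X^⊥`, i.e. `Extⁱ(M, Y) = 0` for all `i ≥ 1` and `M ∈ X`. -/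
def rightPerp (X : C → Prop) (Y : C) : Prop :=
  ∀ M, X M → ∀ i : ℕ, 1 ≤ i → Subsingleton (Abelian.Ext M Y i)

/-- A left Frobenius pair `(X, W)`. -/
structure LeftFrobenius (X W : C → Prop) : Prop where
  subX : IsSubcat X
  subW : IsSubcat W
  extClosed : ExtClosed X
  kerEpiClosed : KerEpiClosed X
  cogen : IsCogenerator W X
  perp : ∀ M, W M → rightPerp X M

/-- A strong left Frobenius pair `(X, W)`. -/
structure StrongLeftFrobenius (X W : C → Prop) extends LeftFrobenius X W : Prop where
  gen : IsGenerator W X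
  proj : ∀ M N, W M → X N → ∀ i : ℕ, 1 ≤ i → Subsingleton (Abelian.Ext M N i)

/-- A cotorsion pair `(U, V)` on an extension-closed subcategory `B` of `C`. -/
structure CotorsionPairOn (B U V : C → Prop) : Prop where
  subU : ∀ M, U M → B M
  subV : ∀ M, V M → B M
  isoU : ∀ {A B' : C}, (A ≅ B') → U A → U B'
  summandU : ∀ {A M : C} (i : A ⟶ M) (p : M ⟶ A), i ≫ p = 𝟙 A → U M → U A
  isoV : ∀ {A B' : C}, (A ≅ B') → V A → V B'
  summandV : ∀ {A M : C} (i : A ⟶ M) (p : M ⟶ A), i ≫ p = 𝟙 A → V M → V A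
  ext1 : ∀ M N, U M → V N → Subsingleton (Abelian.Ext M N 1)
  res : ∀ M, B M → ∃ (V₀ U₀ : C) (f : V₀ ⟶ U₀) (g : U₀ ⟶ M), IsSES f g ∧ U U₀ ∧ V V₀
  cores : ∀ M, B M → ∃ (V₀ U₀ : C) (f : M ⟶ V₀) (g : V₀ ⟶ U₀), IsSES f g ∧ U U₀ ∧ V V₀

/-- `Cone(V, S)`: objects `M` admitting a short exact sequence `0 → V₀ → S₀ → M → 0` with
`V₀ ∈ V` and `S₀ ∈ S`. -/
def ConeCls (V S : C → Prop) (M : C) : Prop :=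
  ∃ (V₀ S₀ : C) (f : V₀ ⟶ S₀) (g : S₀ ⟶ M), IsSES f g ∧ V V₀ ∧ S S₀

/-- `CoCone(V, S)`: objects `M` admitting a short exact sequence `0 → M → V₀ → S₀ → 0` with
`V₀ ∈ V` and `S₀ ∈ S`. -/
def CoConeCls (V S : C → Prop) (M : C) : Prop :=
  ∃ (V₀ S₀ : C) (f : M ⟶ V₀) (g : V₀ ⟶ S₀), IsSES f g ∧ V V₀ ∧ S S₀

/-! ### Short exact sequences -/

section SES

variable {C : Type u} [Category.{v} C] [Abelian C]

lemma IsSES.mono {A B D : C} {f : A ⟶ B} {g : B ⟶ D} (h : IsSES f g) : Mono f := h.2.mono_f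

lemma IsSES.epi {A B D : C} {f : A ⟶ B} {g : B ⟶ D} (h : IsSES f g) : Epi g := h.2.epi_g

lemma IsSES.zero {A B D : C} {f : A ⟶ B} {g : B ⟶ D} (h : IsSES f g) : f ≫ g = 0 := h.1

lemma IsSES.lift {A B D : C} {f : A ⟶ B} {g : B ⟶ D} (h : IsSES f g) {T : C} (x : T ⟶ B)
    (hx : x ≫ g = 0) : ∃ y : T ⟶ A, y ≫ f = x :=
  ⟨h.2.fIsKernel.lift (KernelFork.ofι x hx),
    h.2.fIsKernel.fac (KernelFork.ofι x hx) WalkingParallelPair.zero⟩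

lemma IsSES.desc {A B D : C} {f : A ⟶ B} {g : B ⟶ D} (h : IsSES f g) {T : C} (x : B ⟶ T)
    (hx : f ≫ x = 0) : ∃ y : D ⟶ T, g ≫ y = x :=
  ⟨h.2.gIsCokernel.desc (CokernelCofork.ofπ x hx),
    h.2.gIsCokernel.fac (CokernelCofork.ofπ x hx) WalkingParallelPair.one⟩

lemma IsSES.of_lift {A B D : C} {f : A ⟶ B} {g : B ⟶ D} (hf : Mono f) (hg : Epi g)
    (w : f ≫ g = 0) (H : ∀ {T : C} (x : T ⟶ B), x ≫ g = 0 → ∃ y : T ⟶ A, y ≫ f = x) :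
    IsSES f g := by
  refine ⟨w, ?_⟩
  have hex : (ShortComplex.mk f g w).Exact := by
    apply ShortComplex.exact_of_f_is_kernel
    exact KernelFork.IsLimit.ofι' f w (fun x hx => ⟨(H x hx).choose, (H x hx).choose_spec⟩)
  exact ShortComplex.ShortExact.mk' hex hf hg

lemma IsSES.of_desc {A B D : C} {f : A ⟶ B} {g : B ⟶ D} (hf : Mono f) (hg : Epi g)
    (w : f ≫ g = 0) (H : ∀ {T : C} (x : B ⟶ T), f ≫ x = 0 → ∃ y : D ⟶ T, g ≫ y = x) :
    IsSES f g := by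
  refine ⟨w, ?_⟩
  have hex : (ShortComplex.mk f g w).Exact := by
    apply ShortComplex.exact_of_g_is_cokernel
    exact CokernelCofork.IsColimit.ofπ' g w (fun x hx => ⟨(H x hx).choose, (H x hx).choose_spec⟩)
  exact ShortComplex.ShortExact.mk' hex hf hg

lemma IsSES.zero_id (A : C) : IsSES (0 : (0 : C) ⟶ A) (𝟙 A) :=
  IsSES.of_lift inferInstance inferInstance (by simp)
    (fun x hx => ⟨0, by simpa using hx.symm⟩)

lemma IsSES.id_zero (A : C) : IsSES (𝟙 A) (0 : A ⟶ (0 : C)) :=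
  IsSES.of_lift inferInstance inferInstance (by simp) (fun x _ => ⟨x, by simp⟩)

lemma IsSES.biprod (A B : C) : IsSES (biprod.inl : A ⟶ A ⊞ B) (biprod.snd : A ⊞ B ⟶ B) :=
  IsSES.of_lift inferInstance inferInstance (by simp) (fun x hx => ⟨x ≫ biprod.fst, by
    apply biprod.hom_ext <;> simp [hx]⟩)

/-- Base change of a short exact sequence. -/
lemma IsSES.pullback {A B D B' : C} {f : A ⟶ B} {g : B ⟶ D} (h : IsSES f g) (b : B' ⟶ D) :
    ∃ i : A ⟶ pullback g b, IsSES i (pullback.snd g b) ∧ i ≫ pullback.fst g b = f := by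
  have := h.mono
  have := h.epi
  have hi : pullback.lift f (0 : A ⟶ B') (by simp [h.zero]) ≫ pullback.fst g b = f :=
    pullback.lift_fst _ _ _
  refine ⟨pullback.lift f 0 (by simp [h.zero]),
    IsSES.of_lift ?_ inferInstance (pullback.lift_snd _ _ _) ?_, hi⟩
  · exact mono_of_mono_fac hi
  · intro T x hx
    obtain ⟨y, hy⟩ := h.lift (x ≫ pullback.fst g b)
      (by rw [Category.assoc, pullback.condition, reassoc_of% hx, zero_comp])
    exact ⟨y, by apply pullback.hom_ext <;> simp [hy, hx, pullback.lift_fst, pullback.lift_snd]⟩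

/-- Cobase change of a short exact sequence. -/
lemma IsSES.pushout {A B D A' : C} {f : A ⟶ B} {g : B ⟶ D} (h : IsSES f g) (a : A ⟶ A') :
    ∃ p : pushout f a ⟶ D, IsSES (pushout.inr f a) p ∧ pushout.inl f a ≫ p = g := by
  have := h.mono
  have := h.epi
  have hp : pushout.inl f a ≫ pushout.desc g (0 : A' ⟶ D) (by simp [h.zero]) = g :=
    pushout.inl_desc _ _ _
  refine ⟨pushout.desc g 0 (by simp [h.zero]),
    IsSES.of_desc inferInstance ?_ (pushout.inr_desc _ _ _) ?_, hp⟩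
  · exact epi_of_epi_fac hp
  · intro T x hx
    obtain ⟨y, hy⟩ := h.desc (pushout.inl f a ≫ x)
      (by rw [← Category.assoc, pushout.condition, Category.assoc, hx, comp_zero])
    exact ⟨y, by apply pushout.hom_ext <;>
      simp [hy, hx, pushout.inl_desc_assoc, pushout.inr_desc_assoc]⟩

/-- The kernel `L` of a composite of epimorphisms is an extension of the two kernels. -/
lemma IsSES.comp {K E M K' E' : C} {f : K ⟶ E} {g : E ⟶ M} {f' : K' ⟶ E'} {g' : E' ⟶ E}
    (h : IsSES f g) (h' : IsSES f' g') :
    ∃ (L : C) (l : L ⟶ E') (i : K' ⟶ L) (p : L ⟶ K), IsSES l (g' ≫ g) ∧ IsSES i p := by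
  have := h.mono
  have := h.epi
  have := h'.epi
  obtain ⟨i, hi, -⟩ := h'.pullback f
  refine ⟨_, pullback.fst g' f, i, _, IsSES.of_lift inferInstance (epi_comp g' g) ?_ ?_, hi⟩
  · rw [← Category.assoc, pullback.condition, Category.assoc, h.zero, comp_zero]
  · intro T x hx
    obtain ⟨y, hy⟩ := h.lift (x ≫ g') (by simpa using hx)
    exact ⟨pullback.lift x y hy.symm, pullback.lift_fst _ _ _⟩

/-- The horseshoe lemma, for a morphism `s : Q → B` lifting the epimorphism `Q → D`. -/
lemma IsSES.horseshoe {A B D K P L Q : C} {f : A ⟶ B} {g : B ⟶ D} {k : K ⟶ P} {p : P ⟶ A}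
    {l : L ⟶ Q} {q : Q ⟶ D} (h : IsSES f g) (hA : IsSES k p) (hD : IsSES l q)
    (s : Q ⟶ B) (hs : s ≫ g = q) :
    ∃ (N : C) (n : N ⟶ P ⊞ Q) (r : P ⊞ Q ⟶ B) (i : K ⟶ N) (j : N ⟶ L),
      IsSES n r ∧ IsSES i j := by
  have := h.mono
  have := hA.mono
  have := hA.epi
  have := hD.mono
  have := hD.epi
  -- `P ⊞ Q → B` factors through `A ⊞ Q → B`, whose kernel is `L`.
  have h₁ : IsSES (k ≫ biprod.inl : K ⟶ P ⊞ Q) (biprod.map p (𝟙 Q)) := by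
    refine IsSES.of_lift (mono_comp _ _) inferInstance (by simp [reassoc_of% hA.zero]) ?_
    intro T x hx
    have h1 : x ≫ biprod.fst ≫ p = 0 := by simpa using hx =≫ biprod.fst
    have h2 : x ≫ biprod.snd = 0 := by simpa using hx =≫ biprod.snd
    obtain ⟨y, hy⟩ := hA.lift (x ≫ biprod.fst) (by simpa using h1)
    exact ⟨y, by apply biprod.hom_ext <;> simp [hy, h2]⟩
  obtain ⟨a, ha⟩ := h.lift (l ≫ s) (by rw [Category.assoc, hs, hD.zero])
  have h₂ : IsSES (biprod.lift (-a) l) (biprod.desc f s) := by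
    refine IsSES.of_lift (mono_of_mono_fac (biprod.lift_snd (-a) l)) ?_ (by simp [ha]) ?_
    · refine Preadditive.epi_of_cancel_zero _ (fun x hx => ?_)
      have h1 : f ≫ x = 0 := by simpa using biprod.inl ≫= hx
      have h2 : s ≫ x = 0 := by simpa using biprod.inr ≫= hx
      obtain ⟨y, rfl⟩ := h.desc x h1
      rw [reassoc_of% hs] at h2
      rw [Limits.zero_of_epi_comp q h2, comp_zero]
    · intro T x hx
      have hx' : (x ≫ biprod.fst) ≫ f + (x ≫ biprod.snd) ≫ s = 0 := by
        simpa [biprod.desc_eq] using hx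
      have h3 : (x ≫ biprod.snd) ≫ q = 0 := by
        have := hx' =≫ g
        simpa [h.zero, hs] using this
      obtain ⟨y, hy⟩ := hD.lift _ h3
      refine ⟨y, ?_⟩
      apply biprod.hom_ext
      · rw [← cancel_mono f]
        simp only [Category.assoc, biprod.lift_fst_assoc, Preadditive.neg_comp,
          Preadditive.comp_neg, ha, reassoc_of% hy]
        simp only [Category.assoc] at hx'
        exact (eq_neg_of_add_eq_zero_left hx').symm
      · simp [hy]
  obtain ⟨N, n, i, j, hn, hij⟩ := h₂.comp h₁
  exact ⟨N, n, _, i, j, hn, hij⟩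

end SES

/-! ### Vanishing of Ext -/

section ExtLemmas

variable {C : Type u} [Category.{v} C] [Abelian C] [HasExt.{w} C]

lemma IsSES.exists_lift {K E M P : C} {f : K ⟶ E} {g : E ⟶ M} (h : IsSES f g)
    (hP : Subsingleton (Abelian.Ext P K 1)) (x : P ⟶ M) : ∃ y : P ⟶ E, y ≫ g = x := by
  obtain ⟨z, hz⟩ := Ext.covariant_sequence_exact₃ P h.2 (Ext.mk₀ x) (zero_add 1)
    (Subsingleton.elim _ _)
  obtain ⟨y, rfl⟩ := (Ext.mk₀_bijective P E).2 z
  refine ⟨y, (Ext.mk₀_bijective P M).1 ?_⟩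
  rw [← hz, Ext.mk₀_comp_mk₀]

lemma IsSES.ext_shift {K E M P : C} {f : K ⟶ E} {g : E ⟶ M} (h : IsSES f g) (i : ℕ)
    (hE : Subsingleton (Abelian.Ext P E i)) (hK : Subsingleton (Abelian.Ext P K (i + 1))) :
    Subsingleton (Abelian.Ext P M i) := by
  refine subsingleton_of_forall_eq 0 (fun x => ?_)
  obtain ⟨z, hz⟩ := Ext.covariant_sequence_exact₃ P h.2 x rfl (Subsingleton.elim _ _)
  rw [← hz, Subsingleton.elim z 0, Ext.zero_comp]

/-- Dimension shifting: if the higher Ext groups out of `P` vanish on `X`, they vanish on `X̂`. -/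
lemma ext_hat {X : C → Prop} {P : C}
    (hP : ∀ N, X N → ∀ i : ℕ, 1 ≤ i → Subsingleton (Abelian.Ext P N i)) :
    ∀ (n : ℕ) (M : C), Hat X n M → ∀ i : ℕ, 1 ≤ i → Subsingleton (Abelian.Ext P M i)
  | 0, M, hM, i, hi => hP M hM i hi
  | n + 1, _, ⟨K, E, _, _, h, hE, hK⟩, i, hi =>
    h.ext_shift i (hP E hE i hi) (ext_hat hP n K hK (i + 1) (by omega))

/-- A short exact sequence whose class lies in a vanishing Ext group has a retraction. -/
lemma IsSES.exists_retraction {A B D : C} {f : A ⟶ B} {g : B ⟶ D} (h : IsSES f g)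
    (hP : Subsingleton (Abelian.Ext D A 1)) : ∃ r : B ⟶ A, f ≫ r = 𝟙 A := by
  have := h.mono
  obtain ⟨s, hs⟩ := h.exists_lift hP (𝟙 D)
  obtain ⟨r, hr⟩ := h.lift (𝟙 B - g ≫ s) (by simp [hs])
  refine ⟨r, ?_⟩
  rw [← cancel_mono f]
  simp [hr, reassoc_of% h.zero]

end ExtLemmas

/-! ### The resolving closure `X̂` -/

section Hat

variable {C : Type u} [Category.{v} C] [Abelian C]

/-- `HatGen X W n M` means that there is an exact sequence
`0 → X₀ → Wₙ₋₁ → ⋯ → W₀ → M → 0` with `X₀ ∈ X` and all `Wᵢ ∈ W`. -/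
def HatGen (X W : C → Prop) : ℕ → C → Prop
  | 0, M => X M
  | (n + 1), M => ∃ (K E : C) (f : K ⟶ E) (g : E ⟶ M), IsSES f g ∧ W E ∧ HatGen X W n K

variable {X W : C → Prop}

lemma hatAll_of_mem {M : C} (hM : X M) : HatAll X M := ⟨0, hM⟩

lemma hatAll_of_ses {K E M : C} {f : K ⟶ E} {g : E ⟶ M} (h : IsSES f g) (hE : X E)
    (hK : HatAll X K) : HatAll X M :=
  hK.elim fun n hn => ⟨n + 1, K, E, f, g, h, hE, hn⟩

lemma hat_mem_thick {T : C → Prop} (hT : IsThickSub T) (hX : ∀ N, X N → T N) :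
    ∀ (n : ℕ) (M : C), Hat X n M → T M
  | 0, M, hM => hX M hM
  | n + 1, _, ⟨K, E, f, g, h, hE, hK⟩ => (hT.2 f g h).1 (hat_mem_thick hT hX n K hK) (hX E hE)

variable [HasExt.{w} C]

lemma StrongLeftFrobenius.W_le (hF : StrongLeftFrobenius X W) {M : C} (hM : W M) : X M :=
  hF.gen.1 M hM

lemma hat_of_hatGen (hF : StrongLeftFrobenius X W) :
    ∀ (n : ℕ) (M : C), HatGen X W n M → Hat X n M
  | 0, _, hM => hM
  | n + 1, _, ⟨K, E, f, g, h, hE, hK⟩ => ⟨K, E, f, g, h, hF.W_le hE, hat_of_hatGen hF n K hK⟩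

lemma hatGen_of_mem (hF : StrongLeftFrobenius X W) :
    ∀ (n : ℕ) (M : C), X M → HatGen X W n M
  | 0, _, hM => hM
  | n + 1, M, hM => by
    obtain ⟨X', W₀, f, g, h, hW, hX'⟩ := hF.gen.2 M hM
    exact ⟨X', W₀, f, g, h, hW, hatGen_of_mem hF n X' hX'⟩

lemma hatGen_succ (hF : StrongLeftFrobenius X W) :
    ∀ (n : ℕ) (M : C), HatGen X W n M → HatGen X W (n + 1) M
  | 0, M, hM => hatGen_of_mem hF 1 M hM
  | n + 1, _, ⟨K, E, f, g, h, hE, hK⟩ => ⟨K, E, f, g, h, hE, hatGen_succ hF n K hK⟩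

lemma hatGen_mono (hF : StrongLeftFrobenius X W) {m n : ℕ} (hmn : m ≤ n) {M : C}
    (hM : HatGen X W m M) : HatGen X W n M := by
  induction hmn with
  | refl => exact hM
  | step _ ih => exact hatGen_succ hF _ _ ih

lemma ext_hatGen (hF : StrongLeftFrobenius X W) {n : ℕ} {M P : C} (hP : W P)
    (hM : HatGen X W n M) : Subsingleton (Abelian.Ext P M 1) :=
  ext_hat (fun N hN => hF.proj P N hP hN) n M (hat_of_hatGen hF n M hM) 1 le_rfl

/-- Extension closure, by the horseshoe lemma; the required lift exists because `Ext¹(W, X̂) = 0`. -/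
lemma hatGen_ext (hF : StrongLeftFrobenius X W) (n : ℕ) :
    ∀ {A B D : C} {f : A ⟶ B} {g : B ⟶ D}, IsSES f g → HatGen X W n A → HatGen X W n D →
      HatGen X W n B := by
  induction n with
  | zero => exact fun h hA hD => hF.extClosed _ _ h hA hD
  | succ n ih =>
    intro A B D f g h hA hD
    have hA' := hA
    obtain ⟨K, P, k, p, hkp, hP, hK⟩ := hA
    obtain ⟨L, Q, l, q, hlq, hQ, hL⟩ := hD
    obtain ⟨s, hs⟩ := h.exists_lift (ext_hatGen hF hQ hA') q
    obtain ⟨N, m, r, i, j, hmr, hij⟩ := h.horseshoe hkp hlq s hs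
    exact ⟨N, P ⊞ Q, m, r, hmr, hF.subW.biprod_closed hP hQ, ih hij hK hL⟩

lemma hat_iff_hatGen (hF : StrongLeftFrobenius X W) (n : ℕ) :
    ∀ M : C, Hat X n M ↔ HatGen X W n M := by
  induction n with
  | zero => exact fun M => Iff.rfl
  | succ n ih =>
    refine fun M => ⟨?_, hat_of_hatGen hF _ M⟩
    rintro ⟨K, E, f, g, h, hE, hK⟩
    obtain ⟨X', W₀, f', g', h', hW, hX'⟩ := hF.gen.2 E hE
    obtain ⟨L, l, i, p, hl, hip⟩ := h.comp h'
    exact ⟨L, W₀, l, _, hl, hW, hatGen_ext hF n hip (hatGen_of_mem hF n X' hX') ((ih K).1 hK)⟩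

lemma hatGen_summand (hF : StrongLeftFrobenius X W) (n : ℕ) :
    ∀ {A M : C} (i : A ⟶ M) (p : M ⟶ A), i ≫ p = 𝟙 A → HatGen X W n M → HatGen X W n A := by
  induction n with
  | zero => exact fun i p hip hM => hF.subX.summand_closed i p hip hM
  | succ n ih =>
    rintro A M i p hip ⟨K, E, f, g, h, hE, hK⟩
    have := h.epi
    have : Epi p := (SplitEpi.mk i hip).epi
    -- With `t` lifting the idempotent of `M` to `E`, the kernel `L` of `E → A` is a summand of
    -- `K ⊞ E` through `x ↦ (t x, x)` and `(k, y) ↦ k + (y - t y)`.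
    obtain ⟨t, ht⟩ := h.exists_lift (ext_hatGen hF hE hK) (g ≫ p ≫ i)
    have hL : IsSES (kernel.ι (g ≫ p)) (g ≫ p) :=
      IsSES.of_lift inferInstance (epi_comp g p) (by simp)
        (fun x hx => ⟨kernel.lift _ x hx, by simp⟩)
    obtain ⟨a, ha⟩ := h.lift (kernel.ι (g ≫ p) ≫ t) (by
      rw [Category.assoc, ht]
      simpa only [Category.assoc, zero_comp] using kernel.condition (g ≫ p) =≫ i)
    refine ⟨_, E, kernel.ι (g ≫ p), g ≫ p, hL, hE,
      ih (M := K ⊞ E) (biprod.lift a (kernel.ι (g ≫ p)))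
        (biprod.desc (kernel.lift _ f (by simp [reassoc_of% h.zero]))
          (kernel.lift _ (𝟙 E - t) (by simp [reassoc_of% ht, hip]))) ?_
        (hatGen_ext hF n (IsSES.biprod K E) hK (hatGen_of_mem hF n E (hF.W_le hE)))⟩
    rw [← cancel_mono (kernel.ι (g ≫ p))]
    simp [ha]

lemma hatAll_ext (hF : StrongLeftFrobenius X W) {A B D : C} {f : A ⟶ B} {g : B ⟶ D}
    (h : IsSES f g) (hA : HatAll X A) (hD : HatAll X D) : HatAll X B := by
  obtain ⟨m, hm⟩ := hA
  obtain ⟨n, hn⟩ := hD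
  rw [hat_iff_hatGen hF] at hm hn
  exact ⟨max m n, (hat_iff_hatGen hF _ _).2 (hatGen_ext hF _ h
    (hatGen_mono hF (le_max_left m n) hm) (hatGen_mono hF (le_max_right m n) hn))⟩

lemma hatAll_summand (hF : StrongLeftFrobenius X W) {A M : C} (i : A ⟶ M) (p : M ⟶ A)
    (hip : i ≫ p = 𝟙 A) (hM : HatAll X M) : HatAll X A := by
  obtain ⟨n, hn⟩ := hM
  exact ⟨n, (hat_iff_hatGen hF _ _).2 (hatGen_summand hF n i p hip ((hat_iff_hatGen hF _ _).1 hn))⟩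

lemma hatAll_iso (hF : StrongLeftFrobenius X W) {A B : C} (e : A ≅ B) (hA : HatAll X A) :
    HatAll X B :=
  hatAll_summand hF e.inv e.hom e.inv_hom_id hA

lemma hatAll_res (hF : StrongLeftFrobenius X W) {M : C} (hM : HatAll X M) :
    ∃ (K E : C) (f : K ⟶ E) (g : E ⟶ M), IsSES f g ∧ W E ∧ HatAll X K := by
  obtain ⟨n, hn⟩ := hM
  obtain ⟨K, E, f, g, h, hE, hK⟩ := hatGen_succ hF n M ((hat_iff_hatGen hF n M).1 hn)
  exact ⟨K, E, f, g, h, hE, n, hat_of_hatGen hF n K hK⟩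

lemma hatAll_cone (hF : StrongLeftFrobenius X W) {A B D : C} {f : A ⟶ B} {g : B ⟶ D}
    (h : IsSES f g) (hA : HatAll X A) (hB : HatAll X B) : HatAll X D := by
  obtain ⟨K, E, f', g', h', hE, hK⟩ := hatAll_res hF hB
  obtain ⟨L, l, i, p, hl, hip⟩ := h.comp h'
  exact hatAll_of_ses hl (hF.W_le hE) (hatAll_ext hF hip hK hA)

lemma hatAll_ker_of_mem (hF : StrongLeftFrobenius X W) {A B D : C} {f : A ⟶ B} {g : B ⟶ D}
    (h : IsSES f g) (hB : HatAll X B) (hD : X D) : HatAll X A := by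
  obtain ⟨K, E, f', g', h', hE, hK⟩ := hatAll_res hF hB
  obtain ⟨L, l, i, p, hl, hip⟩ := h.comp h'
  exact hatAll_of_ses hip (hF.kerEpiClosed _ _ hl (hF.W_le hE) hD) hK

lemma hatAll_ker (hF : StrongLeftFrobenius X W) {A B D : C} {f : A ⟶ B} {g : B ⟶ D}
    (h : IsSES f g) (hB : HatAll X B) (hD : HatAll X D) : HatAll X A := by
  -- Pulling back along `E → D` with `E ∈ W` reduces to the case where the quotient lies in `X`.
  obtain ⟨K, E, k, e, hke, hE, hK⟩ := hatAll_res hF hD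
  obtain ⟨i, hi, -⟩ := h.pullback e
  obtain ⟨j, hj, -⟩ := hke.pullback g
  exact hatAll_ker_of_mem hF hi
    (hatAll_iso hF (pullbackSymmetry e g) (hatAll_ext hF hj hK hB)) (hF.W_le hE)

lemma hatAll_thick (hF : StrongLeftFrobenius X W) : IsThickSub (HatAll X) := by
  refine ⟨⟨hatAll_of_mem hF.subX.zero, hatAll_iso hF, ?_, hatAll_summand hF⟩, ?_⟩
  · exact fun {A B} hA hB => hatAll_ext hF (IsSES.biprod A B) hA hB
  · exact fun A B D f g h => ⟨hatAll_cone hF h, hatAll_ext hF h, hatAll_ker hF h⟩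

/-! ### Auslander–Buchweitz approximations -/

/-- `(W, W)` is again a strong left Frobenius pair: extensions in `W`, and kernels of epimorphisms
in `W`, split because of the vanishing of Ext. -/
lemma StrongLeftFrobenius.self (hF : StrongLeftFrobenius X W) : StrongLeftFrobenius W W where
  subX := hF.subW
  subW := hF.subW
  extClosed A B D f g h hA hD := by
    obtain ⟨r, hr⟩ := h.exists_retraction (hF.proj D A hD (hF.W_le hA) 1 le_rfl)
    -- `B` is a summand of `A ⊞ D` through `(r, g)`.
    obtain ⟨s, hs⟩ := h.desc (𝟙 B - r ≫ f) (by simp [reassoc_of% hr])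
    exact hF.subW.summand_closed (biprod.lift r g) (biprod.desc f s) (by simp [hs])
      (hF.subW.biprod_closed hA hD)
  kerEpiClosed A B D f g h hB hD := by
    have hA : X A := hF.kerEpiClosed f g h (hF.W_le hB) (hF.W_le hD)
    obtain ⟨r, hr⟩ := h.exists_retraction (hF.proj D A hD hA 1 le_rfl)
    exact hF.subW.summand_closed f r hr hB
  cogen := ⟨fun _ h => h, fun M hM => ⟨M, 0, 𝟙 M, 0, IsSES.id_zero M, hM, hF.subW.zero⟩⟩
  perp M hM N hN := hF.perp M hM N (hF.W_le hN)
  gen := ⟨fun _ h => h, fun M hM => ⟨0, M, 0, 𝟙 M, IsSES.zero_id M, hM, hF.subW.zero⟩⟩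
  proj M N hM hN := hF.proj M N hM (hF.W_le hN)

/-- A special `X`-precover of `M` yields a special `Ŵ`-preenvelope. -/
lemma approx_env (hF : StrongLeftFrobenius X W) {M Y E : C} {f : Y ⟶ E} {g : E ⟶ M}
    (h : IsSES f g) (hE : X E) (hY : HatAll W Y) :
    ∃ (V₀ U₀ : C) (f : M ⟶ V₀) (g : V₀ ⟶ U₀), IsSES f g ∧ X U₀ ∧ HatAll W V₀ := by
  obtain ⟨W₀, X', a, b, hab, hW, hX'⟩ := hF.cogen.2 E hE
  have := h.mono
  have := h.epi
  have := hab.mono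
  obtain ⟨p, hp, -⟩ := hab.pushout g
  have hq : IsSES (f ≫ a) (pushout.inl a g) := by
    refine IsSES.of_desc (mono_comp f a) inferInstance ?_ ?_
    · rw [Category.assoc, pushout.condition, reassoc_of% h.zero, zero_comp]
    · intro T x hx
      obtain ⟨y, hy⟩ := h.desc (a ≫ x) (by simpa using hx)
      exact ⟨pushout.desc x y hy.symm, pushout.inl_desc _ _ _⟩
  exact ⟨_, X', _, p, hp, hX', hatAll_of_ses hq hW hY⟩

/-- Every object of `X̂` has a special `X`-precover with kernel in `Ŵ`. -/
lemma approx (hF : StrongLeftFrobenius X W) (n : ℕ) :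
    ∀ M : C, Hat X n M →
      ∃ (V₀ U₀ : C) (f : V₀ ⟶ U₀) (g : U₀ ⟶ M), IsSES f g ∧ X U₀ ∧ HatAll W V₀ := by
  induction n with
  | zero => exact fun M hM => ⟨0, M, 0, 𝟙 M, IsSES.zero_id M, hM, hatAll_of_mem hF.subW.zero⟩
  | succ n ih =>
    rintro M ⟨K, E, f, g, h, hE, hK⟩
    obtain ⟨V, U, a, b, hab, hU, hV⟩ := ih K hK
    obtain ⟨Y, X', c, d, hcd, hX', hY⟩ := approx_env hF hab hU hV
    obtain ⟨p, hp, -⟩ := h.pushout c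
    obtain ⟨q, hq, -⟩ := hcd.pushout f
    exact ⟨Y, _, _, p, hp, hF.subX.iso_closed (pushoutSymmetry c f)
      (hF.extClosed _ _ hq hE hX'), hY⟩

end Hat

/-- For a strong left Frobenius pair `(X, W)`, `((W, X̂), (X, Ŵ))` is a
Hovey twin cotorsion pair on `Thick(X) = X̂`; in particular `Ext¹(W, Ŵ) = 0` and, inside `X̂`,
`Cone(Ŵ, W) = CoCone(Ŵ, W) = Ŵ`. -/
theorem statement13 {C : Type u} [Category.{v} C] [Abelian C]
    [EnoughProjectives C] [EnoughInjectives C] [HasExt.{w} C]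
    (X W : C → Prop) (hF : StrongLeftFrobenius X W) :
    CotorsionPairOn (HatAll X) W (HatAll X) ∧
    CotorsionPairOn (HatAll X) X (HatAll W) ∧
    (∀ M N, W M → HatAll W N → Subsingleton (Abelian.Ext M N 1)) ∧
    (∀ M, HatAll X M → (ConeCls (HatAll W) W M ↔ HatAll W M)) ∧
    (∀ M, HatAll X M → (CoConeCls (HatAll W) W M ↔ HatAll W M)) ∧
    (∀ M, thickClosure X M ↔ HatAll X M) := by
  have hW := hF.self
  have hWX : ∀ M, HatAll W M → HatAll X M := fun M ⟨n, hn⟩ =>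
    hat_mem_thick (hatAll_thick hF) (fun N hN => hatAll_of_mem (hF.W_le hN)) n M hn
  have hext : ∀ M N, W M → HatAll X N → Subsingleton (Abelian.Ext M N 1) :=
    fun M N hM ⟨n, hn⟩ => ext_hat (fun N' hN' => hF.proj M N' hM hN') n N hn 1 le_rfl
  refine ⟨?_, ?_, fun M N hM hN => hext M N hM (hWX N hN), fun M _ => ⟨?_, ?_⟩,
    fun M hM => ⟨?_, ?_⟩, fun M => ⟨?_, ?_⟩⟩
  · exact
      { subU := fun M hM => hatAll_of_mem (hF.W_le hM)
        subV := fun M hM => hM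
        isoU := hF.subW.iso_closed
        summandU := hF.subW.summand_closed
        isoV := hatAll_iso hF
        summandV := hatAll_summand hF
        ext1 := hext
        res := fun M hM => hatAll_res hF hM
        cores := fun M hM => ⟨M, 0, 𝟙 M, 0, IsSES.id_zero M, hF.subW.zero, hM⟩ }
  · exact
      { subU := fun M hM => hatAll_of_mem hM
        subV := hWX
        isoU := hF.subX.iso_closed
        summandU := hF.subX.summand_closed
        isoV := hatAll_iso hW
        summandV := hatAll_summand hW
        ext1 := fun M N hM ⟨n, hn⟩ =>
          ext_hat (fun N' hN' => hF.perp N' hN' M hM) n N hn 1 le_rfl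
        res := fun M ⟨n, hn⟩ => approx hF n M hn
        cores := fun M ⟨n, hn⟩ => by
          obtain ⟨V, U, f, g, h, hU, hV⟩ := approx hF n M hn
          exact approx_env hF h hU hV }
  · rintro ⟨V, S, f, g, h, hV, hS⟩
    exact hatAll_of_ses h hS hV
  · intro hM
    obtain ⟨K, E, f, g, h, hE, hK⟩ := hatAll_res hW hM
    exact ⟨K, E, f, g, h, hK, hE⟩
  · rintro ⟨V, S, f, g, h, hV, hS⟩
    obtain ⟨r, hr⟩ := h.exists_retraction (hext S M hS hM)
    exact hatAll_summand hW f r hr hV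
  · exact fun hM => ⟨M, 0, 𝟙 M, 0, IsSES.id_zero M, hM, hF.subW.zero⟩
  · exact fun hM => hM _ (hatAll_thick hF) (fun N hN => hatAll_of_mem hN)
  · rintro ⟨n, hn⟩ T hT hX
    exact hat_mem_thick hT hX n M hn

end FrobeniusPaper
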